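/- arXiv:1908.04543 — 3 statements merged into one kernel-verified Lean document; each statement's English description precedes it below -/
import Mathlib

section
/- Let μ > 0. The operator A_μ on L²((0,∞)) defined by (A_μφ)(t) = ∫₀^∞ (t·u / ((t+μ²)(t+u+μ²)(u+μ²))) φ(u) du is a bounded, self-adjoint, positive operator, and its operator norm equals π. -/
open MeasureTheory Real Set
open scoped RealInnerProductSpace

/-- the half-line measure -/
noncomputable abbrev nuP : Measure ℝ := volume.restrict (Set.Ioi (0:ℝ))

/-- the kernel -/
noncomputable def kK (m t u : ℝ) : ℝ := t * u / ((t + m) * (t + u + m) * (u + m))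

lemma kK_symm (m t u : ℝ) : kK m t u = kK m u t := by
  unfold kK; congr 1 <;> ring

lemma kK_nonneg {m t u : ℝ} (hm : 0 < m) (ht : 0 < t) (hu : 0 < u) : 0 ≤ kK m t u := by
  unfold kK; positivity

lemma kK_le {m t u : ℝ} (hm : 0 < m) (ht : 0 < t) (hu : 0 < u) : kK m t u ≤ 1 / (t + u) := by
  unfold kK
  rw [div_le_div_iff₀ (by positivity) (by positivity)]
  have h1 : t * u ≤ (t + m) * (u + m) := by nlinarith [mul_pos ht hm, mul_pos hu hm, mul_pos hm hm]
  have h2 : t + u ≤ t + u + m := by linarith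
  calc t * u * (t + u) ≤ ((t + m) * (u + m)) * (t + u + m) := by gcongr
    _ = _ := by ring

lemma kK_meas (m : ℝ) : Measurable (fun p : ℝ × ℝ => kK m p.1 p.2) := by
  unfold kK; fun_prop

lemma deriv_w {t u : ℝ} (ht : 0 < t) (hu : 0 < u) :
    HasDerivAt (fun u => 2 / √t * arctan (√u / √t)) (1 / (t + u) * (√u)⁻¹) u := by
  have h := (((Real.hasDerivAt_sqrt hu.ne').div_const (√t)).arctan).const_mul (2 / √t)
  refine h.congr_deriv ?_
  have h1 : 0 < √t := Real.sqrt_pos.2 ht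
  have h2 : 0 < √u := Real.sqrt_pos.2 hu
  obtain ⟨a, ha⟩ : ∃ a, √t = a := ⟨_, rfl⟩
  obtain ⟨b, hb⟩ : ∃ b, √u = b := ⟨_, rfl⟩
  have e1 : t = a ^ 2 := by rw [← ha, Real.sq_sqrt ht.le]
  have e2 : u = b ^ 2 := by rw [← hb, Real.sq_sqrt hu.le]
  rw [ha] at h1; rw [hb] at h2
  rw [ha, hb, e1, e2]
  field_simp

lemma tend_w {t : ℝ} (ht : 0 < t) :
    Filter.Tendsto (fun u => 2 / √t * arctan (√u / √t)) Filter.atTop (nhds (2 / √t * (π / 2))) := by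
  have h1 : 0 < √t := Real.sqrt_pos.2 ht
  apply Filter.Tendsto.const_mul
  refine (tendsto_arctan_atTop.mono_right nhdsWithin_le_nhds).comp ?_
  exact Real.tendsto_sqrt_atTop.atTop_div_const h1

lemma cont_w (t : ℝ) : Continuous (fun u => 2 / √t * arctan (√u / √t)) := by
  refine continuous_const.mul (Real.continuous_arctan.comp ?_)
  exact Real.continuous_sqrt.div_const _

lemma weight_lint {m t : ℝ} (hm : 0 < m) (ht : 0 < t) :
    ∫⁻ u, ENNReal.ofReal (kK m t u) * ENNReal.ofReal ((√u)⁻¹) ∂nuP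
      ≤ ENNReal.ofReal π * ENNReal.ofReal ((√t)⁻¹) := by
  have hint := integrableOn_Ioi_deriv_of_nonneg (g := (fun u => 2 / √t * arctan (√u / √t)))
    (g' := fun u => 1 / (t + u) * (√u)⁻¹) (a := 0) (cont_w t).continuousWithinAt
    (fun u hu => deriv_w ht hu) (fun u hu => by have : 0 < u := hu; positivity) (tend_w ht)
  have hval := integral_Ioi_of_hasDerivAt_of_nonneg (g := (fun u => 2 / √t * arctan (√u / √t)))
    (g' := fun u => 1 / (t + u) * (√u)⁻¹) (a := 0) (cont_w t).continuousWithinAt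
    (fun u hu => deriv_w ht hu) (fun u hu => by have : 0 < u := hu; positivity) (tend_w ht)
  calc ∫⁻ u, ENNReal.ofReal (kK m t u) * ENNReal.ofReal ((√u)⁻¹) ∂nuP
      ≤ ∫⁻ u, ENNReal.ofReal (1 / (t + u) * (√u)⁻¹) ∂nuP := by
        refine setLIntegral_mono_ae' measurableSet_Ioi (Filter.Eventually.of_forall fun u hu => ?_)
        have hu : 0 < u := hu
        rw [← ENNReal.ofReal_mul (kK_nonneg hm ht hu)]
        apply ENNReal.ofReal_le_ofReal
        have := kK_le hm ht hu
        gcongr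
    _ = ENNReal.ofReal (∫ u in Ioi 0, 1 / (t + u) * (√u)⁻¹) := by
        rw [ofReal_integral_eq_lintegral_ofReal hint]
        refine (ae_restrict_iff' measurableSet_Ioi).2 (Filter.Eventually.of_forall fun u hu => ?_)
        have hu : 0 < u := hu
        simp only [Pi.zero_apply]; positivity
    _ = _ := by
        rw [hval, ← ENNReal.ofReal_mul pi_pos.le]
        congr 1
        simp
        ring

lemma schur {m : ℝ} (hm : 0 < m) (f : ℝ → ENNReal) (hf : Measurable f) :
    ∫⁻ t, (∫⁻ u, ENNReal.ofReal (kK m t u) * f u ∂nuP) ^ 2 ∂nuP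
      ≤ ENNReal.ofReal π ^ 2 * ∫⁻ u, f u ^ 2 ∂nuP := by
  have hk := kK_meas m
  have hw : Measurable (fun u : ℝ => ENNReal.ofReal ((√u)⁻¹)) := by fun_prop
  set w : ℝ → ENNReal := fun u : ℝ => ENNReal.ofReal ((√u)⁻¹) with hwdef
  have hkt : ∀ t, Measurable (fun u => kK m t u) := fun t => hk.comp (measurable_const.prodMk measurable_id)
  have hw0 : ∀ u, 0 < u → w u ≠ 0 := fun u hu => by
    simp only [hwdef, ne_eq, ENNReal.ofReal_eq_zero, not_le]; positivity
  have hwt : ∀ u, w u ≠ ⊤ := fun u => ENNReal.ofReal_ne_top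
  have step : ∀ t, 0 < t → (∫⁻ u, ENNReal.ofReal (kK m t u) * f u ∂nuP) ^ 2 ≤
      ENNReal.ofReal π * w t * ∫⁻ u, ENNReal.ofReal (kK m t u) * (f u ^ 2 * (w u)⁻¹) ∂nuP := by
    intro t ht
    have h1 : ∫⁻ u, ENNReal.ofReal (kK m t u) * f u ∂nuP = 
        ∫⁻ u, (ENNReal.ofReal (kK m t u) * w u) ^ (1/2:ℝ) *
          (ENNReal.ofReal (kK m t u) * (f u ^ 2 * (w u)⁻¹)) ^ (1/2:ℝ) ∂nuP := by
      refine setLIntegral_congr_fun measurableSet_Ioi fun u hu => ?_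
      have hu : 0 < u := hu
      rw [← ENNReal.mul_rpow_of_nonneg _ _ (by norm_num)]
      have : ENNReal.ofReal (kK m t u) * w u * (ENNReal.ofReal (kK m t u) * (f u ^ 2 * (w u)⁻¹))
          = (ENNReal.ofReal (kK m t u) * f u) ^ (2:ℝ) := by
        calc _ = (ENNReal.ofReal (kK m t u) * f u) ^ 2 * (w u * (w u)⁻¹) := by ring
          _ = _ := by rw [ENNReal.mul_inv_cancel (hw0 u hu) (hwt u), mul_one]; norm_cast
      rw [this, ← ENNReal.rpow_mul]; norm_num
    have h2 := ENNReal.lintegral_mul_norm_pow_le (μ := nuP)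
      (f := fun u => ENNReal.ofReal (kK m t u) * w u)
      (g := fun u => ENNReal.ofReal (kK m t u) * (f u ^ 2 * (w u)⁻¹)) (p := 1/2) (q := 1/2)
      ((hkt t).ennreal_ofReal.mul hw).aemeasurable
      ((hkt t).ennreal_ofReal.mul ((hf.pow_const 2).mul hw.inv)).aemeasurable
      (by norm_num) (by norm_num) (by norm_num)
    rw [← h1, ← ENNReal.mul_rpow_of_nonneg _ _ (by norm_num)] at h2
    calc _ ≤ _ := pow_le_pow_left' h2 2
      _ = (∫⁻ u, ENNReal.ofReal (kK m t u) * w u ∂nuP) *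
          ∫⁻ u, ENNReal.ofReal (kK m t u) * (f u ^ 2 * (w u)⁻¹) ∂nuP := by
        rw [← ENNReal.rpow_natCast, ← ENNReal.rpow_mul]; norm_num
      _ ≤ _ := by gcongr; exact weight_lint hm ht
  calc ∫⁻ t, (∫⁻ u, ENNReal.ofReal (kK m t u) * f u ∂nuP) ^ 2 ∂nuP
      ≤ ∫⁻ t, ENNReal.ofReal π * w t * ∫⁻ u, ENNReal.ofReal (kK m t u) * (f u ^ 2 * (w u)⁻¹) ∂nuP ∂nuP :=
        setLIntegral_mono_ae' measurableSet_Ioi (Filter.Eventually.of_forall fun t ht => step t ht)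
    _ = ∫⁻ t, ∫⁻ u, ENNReal.ofReal π * w t * (ENNReal.ofReal (kK m t u) * (f u ^ 2 * (w u)⁻¹)) ∂nuP ∂nuP := by
        congr 1; ext t
        rw [lintegral_const_mul]
        exact ((hkt t).ennreal_ofReal.mul ((hf.pow_const 2).mul hw.inv))
    _ = ∫⁻ u, ∫⁻ t, ENNReal.ofReal π * w t * (ENNReal.ofReal (kK m t u) * (f u ^ 2 * (w u)⁻¹)) ∂nuP ∂nuP := by
        apply lintegral_lintegral_swap
        apply Measurable.aemeasurable
        exact ((measurable_const.mul (hw.comp measurable_fst)).mul (hk.ennreal_ofReal.mul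
          (((hf.comp measurable_snd).pow_const 2).mul (hw.comp measurable_snd).inv)))
    _ ≤ ∫⁻ u, ENNReal.ofReal π ^ 2 * f u ^ 2 ∂nuP := by
        refine setLIntegral_mono_ae' measurableSet_Ioi (Filter.Eventually.of_forall fun u hu => ?_)
        have hu : 0 < u := hu
        calc ∫⁻ t, ENNReal.ofReal π * w t * (ENNReal.ofReal (kK m t u) * (f u ^ 2 * (w u)⁻¹)) ∂nuP
            = ∫⁻ t, ENNReal.ofReal π * (f u ^ 2 * (w u)⁻¹) * (ENNReal.ofReal (kK m u t) * w t) ∂nuP := by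
              congr 1; ext t; rw [kK_symm m t u]; ring
          _ = ENNReal.ofReal π * (f u ^ 2 * (w u)⁻¹) * ∫⁻ t, (ENNReal.ofReal (kK m u t) * w t) ∂nuP := by
              rw [lintegral_const_mul]
              exact (hkt u).ennreal_ofReal.mul hw
          _ ≤ ENNReal.ofReal π * (f u ^ 2 * (w u)⁻¹) * (ENNReal.ofReal π * w u) := by
              gcongr; exact weight_lint hm hu
          _ = ENNReal.ofReal π ^ 2 * f u ^ 2 * (w u * (w u)⁻¹) := by ring
          _ = _ := by rw [ENNReal.mul_inv_cancel (hw0 u hu) (hwt u), mul_one]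
    _ = _ := by rw [lintegral_const_mul]; exact hf.pow_const 2

/-- the Hilbert space -/
noncomputable abbrev HP := Lp ℝ 2 nuP

lemma enorm_sq (f : ℝ → ℝ) : eLpNorm f 2 nuP ^ 2 = ∫⁻ u, ‖f u‖ₑ ^ 2 ∂nuP := by
  have := eLpNorm_nnreal_pow_eq_lintegral (μ := nuP) (f := f) (p := 2) (by norm_num)
  simpa using this

lemma k_enorm {m t u : ℝ} (hm : 0 < m) (ht : 0 < t) (hu : 0 < u) (x : ℝ) :
    ‖kK m t u * x‖ₑ = ENNReal.ofReal (kK m t u) * ‖x‖ₑ := by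
  rw [enorm_mul, Real.enorm_of_nonneg (kK_nonneg hm ht hu)]

lemma schur_phi {m : ℝ} (hm : 0 < m) (φ : HP) :
    ∫⁻ t, (∫⁻ u, ‖kK m t u * φ u‖ₑ ∂nuP) ^ 2 ∂nuP ≤ (ENNReal.ofReal π * eLpNorm φ 2 nuP) ^ 2 := by
  rw [mul_pow, enorm_sq]
  refine le_trans (le_of_eq ?_) (schur hm (fun u => ‖φ u‖ₑ) (Lp.stronglyMeasurable φ).measurable.enorm)
  refine setLIntegral_congr_fun measurableSet_Ioi fun t ht => ?_
  congr 1
  refine setLIntegral_congr_fun measurableSet_Ioi fun u hu => ?_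
  exact k_enorm hm ht hu _

lemma meas_kphi (m : ℝ) (φ : HP) : Measurable (fun p : ℝ × ℝ => kK m p.1 p.2 * φ p.2) :=
  (kK_meas m).mul ((Lp.stronglyMeasurable φ).measurable.comp measurable_snd)

lemma int_ae {m : ℝ} (hm : 0 < m) (φ : HP) :
    ∀ᵐ t ∂nuP, Integrable (fun u => kK m t u * φ u) nuP := by
  have hfin : ∫⁻ t, (∫⁻ u, ‖kK m t u * φ u‖ₑ ∂nuP) ^ 2 ∂nuP ≠ ⊤ :=
    ((schur_phi hm φ).trans_lt (ENNReal.pow_lt_top (ENNReal.mul_lt_top ENNReal.ofReal_lt_top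
      (Lp.memLp φ).2))).ne
  have hme : Measurable fun t => (∫⁻ u, ‖kK m t u * φ u‖ₑ ∂nuP) ^ 2 :=
    (Measurable.lintegral_prod_right' (meas_kphi m φ).enorm).pow_const 2
  filter_upwards [ae_lt_top hme hfin] with t ht
  refine ⟨((meas_kphi m φ).comp (measurable_const.prodMk measurable_id)).aestronglyMeasurable, ?_⟩
  by_contra h
  rw [HasFiniteIntegral, not_lt, top_le_iff] at h
  rw [h] at ht
  simp at ht

lemma T_meas (m : ℝ) (φ : HP) : StronglyMeasurable (fun t => ∫ u, kK m t u * φ u ∂nuP) :=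
  StronglyMeasurable.integral_prod_right (f := fun t u => kK m t u * φ u)
    (meas_kphi m φ).stronglyMeasurable

lemma T_norm {m : ℝ} (hm : 0 < m) (φ : HP) :
    eLpNorm (fun t => ∫ u, ‖kK m t u * φ u‖ ∂nuP) 2 nuP ≤ ENNReal.ofReal π * eLpNorm φ 2 nuP := by
  rw [← ENNReal.pow_le_pow_left_iff (n := 2) (by norm_num), enorm_sq]
  refine le_trans (lintegral_mono fun t => ?_) (schur_phi hm φ)
  gcongr
  refine (enorm_integral_le_lintegral_enorm _).trans (le_of_eq ?_)
  simp only [enorm_norm]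

lemma T_norm' {m : ℝ} (hm : 0 < m) (φ : HP) :
    eLpNorm (fun t => ∫ u, kK m t u * φ u ∂nuP) 2 nuP ≤ ENNReal.ofReal π * eLpNorm φ 2 nuP := by
  refine (eLpNorm_mono fun t => ?_).trans (T_norm hm φ)
  refine (norm_integral_le_integral_norm _).trans (le_abs_self _)

lemma T_memLp {m : ℝ} (hm : 0 < m) (φ : HP) : MemLp (fun t => ∫ u, kK m t u * φ u ∂nuP) 2 nuP :=
  ⟨(T_meas m φ).aestronglyMeasurable, (T_norm' hm φ).trans_lt
    (ENNReal.mul_lt_top ENNReal.ofReal_lt_top (Lp.memLp φ).2)⟩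

lemma Tabs_memLp {m : ℝ} (hm : 0 < m) (φ : HP) :
    MemLp (fun t => ∫ u, ‖kK m t u * φ u‖ ∂nuP) 2 nuP :=
  ⟨(StronglyMeasurable.integral_prod_right (f := fun t u => ‖kK m t u * φ u‖)
    (meas_kphi m φ).stronglyMeasurable.norm).aestronglyMeasurable, (T_norm hm φ).trans_lt
    (ENNReal.mul_lt_top ENNReal.ofReal_lt_top (Lp.memLp φ).2)⟩

/-- the operator -/
noncomputable def opA (m : ℝ) (hm : 0 < m) : HP →L[ℝ] HP :=
  LinearMap.mkContinuous
    { toFun := fun φ => (T_memLp hm φ).toLp _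
      map_add' := fun φ ψ => by
        rw [← MemLp.toLp_add, MemLp.toLp_eq_toLp_iff]
        filter_upwards [int_ae hm φ, int_ae hm ψ] with t h1 h2
        simp only [Pi.add_apply]
        rw [← integral_add h1 h2]
        apply integral_congr_ae
        filter_upwards [Lp.coeFn_add φ ψ] with u hu
        rw [hu, Pi.add_apply, mul_add]
      map_smul' := fun c φ => by
        rw [RingHom.id_apply, ← MemLp.toLp_const_smul, MemLp.toLp_eq_toLp_iff]
        filter_upwards with t
        simp only [Pi.smul_apply, smul_eq_mul]
        rw [← integral_const_mul]
        apply integral_congr_ae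
        filter_upwards [Lp.coeFn_smul c φ] with u hu
        rw [hu, Pi.smul_apply, smul_eq_mul]; ring } π (fun φ => by
    simp only [LinearMap.coe_mk, AddHom.coe_mk, Lp.norm_toLp]
    have e : π * ‖φ‖ = (ENNReal.ofReal π * eLpNorm φ 2 nuP).toReal := by
      rw [Lp.norm_def, ENNReal.toReal_mul, ENNReal.toReal_ofReal pi_pos.le]
    rw [e]
    exact ENNReal.toReal_mono (ENNReal.mul_ne_top ENNReal.ofReal_ne_top (Lp.memLp φ).2.ne)
      (T_norm' hm φ))

lemma opA_coe {m : ℝ} (hm : 0 < m) (φ : HP) :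
    (opA m hm φ : ℝ → ℝ) =ᵐ[nuP] fun t => ∫ u, kK m t u * φ u ∂nuP :=
  MemLp.coeFn_toLp (T_memLp hm φ)

lemma opA_norm_le {m : ℝ} (hm : 0 < m) : ‖opA m hm‖ ≤ π :=
  LinearMap.mkContinuous_norm_le _ pi_pos.le _

lemma opA_inner {m : ℝ} (hm : 0 < m) (φ ψ : HP) :
    ⟪opA m hm φ, ψ⟫ = ∫ t, ∫ u, kK m t u * φ u * ψ t ∂nuP ∂nuP := by
  rw [L2.inner_def]
  apply integral_congr_ae
  filter_upwards [opA_coe hm φ] with t ht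
  rw [ht, integral_mul_const]
  simp [mul_comm]

lemma int2 {m : ℝ} (hm : 0 < m) (φ ψ : HP) :
    Integrable (fun p : ℝ × ℝ => kK m p.1 p.2 * φ p.2 * ψ p.1) (nuP.prod nuP) := by
  rw [integrable_prod_iff]
  · constructor
    · filter_upwards [int_ae hm φ] with t ht
      exact ht.mul_const _
    · have h := (Tabs_memLp hm φ).integrable_mul (Lp.memLp ψ).norm
      refine h.congr (Filter.Eventually.of_forall fun t => ?_)
      simp only [Pi.mul_apply, norm_mul]
      rw [← integral_mul_const]
  · exact ((meas_kphi m φ).mul ((Lp.stronglyMeasurable ψ).measurable.comp measurable_fst)).aestronglyMeasurable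

lemma opA_symm {m : ℝ} (hm : 0 < m) (φ ψ : HP) : ⟪opA m hm φ, ψ⟫ = ⟪φ, opA m hm ψ⟫ := by
  rw [real_inner_comm (opA m hm ψ) φ, opA_inner, opA_inner, integral_integral_swap (int2 hm φ ψ)]
  congr 1; ext t; congr 1; ext u
  rw [kK_symm]; ring

lemma ae_pos : ∀ᵐ p ∂(nuP.prod nuP), 0 < p.1 ∧ 0 < p.2 := by
  rw [Measure.prod_restrict]
  filter_upwards [ae_restrict_mem (measurableSet_Ioi.prod measurableSet_Ioi)] with p hp
  exact hp

lemma kK_exp {m t u : ℝ} (hm : 0 < m) (ht : 0 < t) (hu : 0 < u) (x y : ℝ) :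
    ∫ s, (rexp (-s * (t + m/2)) * (t / (t + m) * x)) * (rexp (-s * (u + m/2)) * (u / (u + m) * y)) ∂nuP
      = kK m t u * y * x := by
  have h := integral_exp_mul_Ioi (a := -(t + u + m)) (by linarith) 0
  have e : ∀ s, (rexp (-s * (t + m/2)) * (t / (t + m) * x)) * (rexp (-s * (u + m/2)) * (u / (u + m) * y))
      = rexp (-(t + u + m) * s) * ((t / (t + m) * x) * (u / (u + m) * y)) := by
    intro s
    rw [show -(t + u + m) * s = -s * (t + m/2) + -s * (u + m/2) by ring, Real.exp_add]; ring
  simp only [e]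
  rw [integral_mul_const, h, neg_div_neg_eq, mul_zero, Real.exp_zero]
  unfold kK
  field_simp

lemma opA_pos {m : ℝ} (hm : 0 < m) (φ : HP) : 0 ≤ ⟪opA m hm φ, φ⟫ := by
  set F : ℝ → ℝ → ℝ := fun s t => rexp (-s * (t + m/2)) * (t / (t + m) * φ t) with hF
  have hφ := (Lp.stronglyMeasurable φ).measurable
  have hFm : Measurable (fun p : ℝ × ℝ => F p.1 p.2) := by
    simp only [hF]
    have : Measurable (fun p : ℝ × ℝ => φ p.2) := hφ.comp measurable_snd
    fun_prop
  have hint : Integrable (Function.uncurry fun (p : ℝ × ℝ) (s : ℝ) => F s p.1 * F s p.2)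
      ((nuP.prod nuP).prod nuP) := by
    rw [integrable_prod_iff]
    · constructor
      · filter_upwards [ae_pos] with p hp
        have h := integrableOn_exp_mul_Ioi (a := -(p.1 + p.2 + m)) (by linarith [hp.1, hp.2]) 0
        refine (h.mul_const ((p.1 / (p.1 + m) * φ p.1) * (p.2 / (p.2 + m) * φ p.2))).congr
          (Filter.Eventually.of_forall fun s => ?_)
        simp only [Function.uncurry, hF]
        rw [show -(p.1 + p.2 + m) * s = -s * (p.1 + m/2) + -s * (p.2 + m/2) by ring, Real.exp_add]; ring
      · refine (int2 hm φ φ).norm.congr ?_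
        filter_upwards [ae_pos] with p hp
        have h := kK_exp hm hp.1 hp.2 |φ p.1| |φ p.2|
        rw [norm_mul, norm_mul, Real.norm_of_nonneg (kK_nonneg hm hp.1 hp.2), Real.norm_eq_abs,
          Real.norm_eq_abs, ← h]
        congr 1; ext s
        simp only [Function.uncurry, hF, norm_mul, Real.norm_eq_abs, Real.abs_exp]
        rw [abs_of_pos (div_pos hp.1 (by linarith [hp.1]) : 0 < p.1 / (p.1 + m)),
          abs_of_pos (div_pos hp.2 (by linarith [hp.2]) : 0 < p.2 / (p.2 + m))]
    · apply Measurable.aestronglyMeasurable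
      exact (hFm.comp (measurable_snd.prodMk (measurable_fst.comp measurable_fst))).mul
        (hFm.comp (measurable_snd.prodMk (measurable_snd.comp measurable_fst)))
  rw [opA_inner, ← integral_prod (fun p : ℝ × ℝ => kK m p.1 p.2 * φ p.2 * φ p.1) (int2 hm φ φ)]
  have h1 : ∫ p, kK m p.1 p.2 * φ p.2 * φ p.1 ∂(nuP.prod nuP)
      = ∫ p : ℝ × ℝ, ∫ s, F s p.1 * F s p.2 ∂nuP ∂(nuP.prod nuP) := by
    apply integral_congr_ae
    filter_upwards [ae_pos] with p hp
    exact (kK_exp hm hp.1 hp.2 _ _).symm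
  rw [h1, integral_integral_swap hint]
  apply integral_nonneg
  intro s
  simp only [Pi.zero_apply]
  rw [integral_prod_mul (fun t => F s t) (fun t => F s t)]
  exact mul_self_nonneg _

/-- test function -/
noncomputable def gT (a b : ℝ) : ℝ → ℝ := (Icc a b).indicator (fun u => (√u)⁻¹)

lemma gT_sq {a : ℝ} (b : ℝ) (ha : 0 < a) (u : ℝ) : gT a b u ^ 2 = (Icc a b).indicator (fun u => 1 / u) u := by
  unfold gT
  by_cases h : u ∈ Icc a b
  · simp [h, inv_pow, Real.sq_sqrt (ha.le.trans h.1)]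
  · simp [h]

lemma gT_restrict {a b : ℝ} (ha : 0 < a) : nuP.restrict (Icc a b) = volume.restrict (Icc a b) := by
  rw [Measure.restrict_restrict measurableSet_Icc]
  congr 1
  exact inter_eq_left.2 fun x hx => ha.trans_le hx.1

lemma gT_memLp {a : ℝ} (b : ℝ) (ha : 0 < a) : MemLp (gT a b) 2 nuP := by
  have hm : Measurable (gT a b) := by
    unfold gT; exact Measurable.indicator (by fun_prop) measurableSet_Icc
  rw [memLp_two_iff_integrable_sq hm.aestronglyMeasurable]
  simp only [gT_sq b ha]
  rw [integrable_indicator_iff measurableSet_Icc, IntegrableOn, gT_restrict ha]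
  apply ContinuousOn.integrableOn_Icc
  exact continuousOn_const.div continuousOn_id fun x hx => (ha.trans_le hx.1).ne'

lemma gT_norm {a b : ℝ} (ha : 0 < a) (hab : a ≤ b) :
    ‖(gT_memLp b ha).toLp _‖ ^ 2 = log (b / a) := by
  rw [← real_inner_self_eq_norm_sq, L2.inner_def]
  calc _ = ∫ u, (Icc a b).indicator (fun u => 1 / u) u ∂nuP := by
        apply integral_congr_ae
        filter_upwards [(gT_memLp b ha).coeFn_toLp] with u hu
        rw [hu, ← gT_sq b ha]
        simp [sq]
    _ = _ := by
        rw [integral_indicator measurableSet_Icc, gT_restrict ha, integral_Icc_eq_integral_Ioc,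
          ← intervalIntegral.integral_of_le hab, integral_one_div_of_pos ha (ha.trans_le hab)]

lemma kK_ge {m S t u : ℝ} (hm : 0 < m) (hS : 0 < S) (ht : S ≤ t) (hu : S ≤ u) :
    (S / (S + m)) ^ 3 * (1 / (t + u)) ≤ kK m t u := by
  have key : ∀ x, S ≤ x → S / (S + m) ≤ x / (x + m) := fun x hx => by
    rw [div_le_div_iff₀ (by linarith) (by linarith)]; nlinarith
  have ht0 : 0 < t := by linarith
  have hu0 : 0 < u := by linarith
  have e : kK m t u = (t / (t + m)) * (u / (u + m)) * ((t + u) / (t + u + m)) * (1 / (t + u)) := by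
    unfold kK; field_simp
  rw [e, show (S / (S + m)) ^ 3 = (S / (S + m)) * (S / (S + m)) * (S / (S + m)) by ring]
  have h1 := key t ht
  have h2 := key u hu
  have h3 := key (t + u) (by linarith)
  gcongr

lemma pt_lower {m S b t : ℝ} (hm : 0 < m) (hS : 1 < S) (hSt : S ^ 2 ≤ t) (htb : t * S ≤ b) :
    (S / (S + m)) ^ 3 * (2 * (arctan √S - arctan (√S)⁻¹)) * (√t)⁻¹
      ≤ ∫ u, kK m t u * gT S b u ∂nuP := by
  have hS0 : 0 < S := by linarith
  have hSt' : S ≤ t := by nlinarith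
  have ht0 : 0 < t := by linarith
  have hSb : S ≤ b := by nlinarith
  have e1 : ∫ u, kK m t u * gT S b u ∂nuP = ∫ u in Icc S b, kK m t u * (√u)⁻¹ := by
    rw [← gT_restrict hS0, ← integral_indicator measurableSet_Icc]
    congr 1; ext u
    unfold gT
    by_cases h : u ∈ Icc S b <;> simp [h]
  have hc : ContinuousOn (fun u => 1 / (t + u) * (√u)⁻¹) (Icc S b) := by
    refine ContinuousOn.mul (continuousOn_const.div (by fun_prop) fun x hx => ?_)
      (ContinuousOn.inv₀ (by fun_prop) fun x hx => ?_)
    · have := hx.1; linarith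
    · have := hx.1; exact (Real.sqrt_pos.2 (by linarith)).ne'
  have hc2 : ContinuousOn (fun u => kK m t u * (√u)⁻¹) (Icc S b) := by
    unfold kK
    refine ContinuousOn.mul (ContinuousOn.div (by fun_prop) (by fun_prop) fun x hx => ?_)
      (ContinuousOn.inv₀ (by fun_prop) fun x hx => ?_)
    · have := hx.1
      have : 0 < x := by linarith
      positivity
    · have := hx.1; exact (Real.sqrt_pos.2 (by linarith)).ne'
  have e2 : ∫ u in Icc S b, 1 / (t + u) * (√u)⁻¹
      = 2 / √t * arctan (√b / √t) - 2 / √t * arctan (√S / √t) := by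
    rw [integral_Icc_eq_integral_Ioc, ← intervalIntegral.integral_of_le hSb]
    apply intervalIntegral.integral_eq_sub_of_hasDerivAt (f := fun u => 2 / √t * arctan (√u / √t))
    · intro x hx
      rw [uIcc_of_le hSb] at hx
      exact deriv_w ht0 (by linarith [hx.1])
    · apply ContinuousOn.intervalIntegrable
      rwa [uIcc_of_le hSb]
  have hst : 0 < √t := Real.sqrt_pos.2 ht0
  have hsS : 0 < √S := Real.sqrt_pos.2 hS0
  have a1 : arctan √S ≤ arctan (√b / √t) := by
    apply arctan_strictMono.monotone
    rw [le_div_iff₀ hst, ← Real.sqrt_mul hS0.le]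
    exact Real.sqrt_le_sqrt (by linarith)
  have a2 : arctan (√S / √t) ≤ arctan (√S)⁻¹ := by
    apply arctan_strictMono.monotone
    rw [div_le_iff₀ hst, ← div_eq_inv_mul, le_div_iff₀ hsS, ← Real.sqrt_mul hS0.le]
    exact Real.sqrt_le_sqrt (by nlinarith)
  rw [e1]
  calc _ ≤ (S / (S + m)) ^ 3 * (2 / √t * arctan (√b / √t) - 2 / √t * arctan (√S / √t)) := by
        rw [mul_assoc]
        apply mul_le_mul_of_nonneg_left _ (by positivity)
        rw [← mul_sub, show 2 * (arctan √S - arctan (√S)⁻¹) * (√t)⁻¹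
          = 2 / √t * (arctan √S - arctan (√S)⁻¹) by ring]
        apply mul_le_mul_of_nonneg_left _ (by positivity)
        linarith
    _ = ∫ u in Icc S b, (S / (S + m)) ^ 3 * (1 / (t + u) * (√u)⁻¹) := by
        rw [integral_const_mul, e2]
    _ ≤ _ := by
        apply setIntegral_mono_on (hc.integrableOn_Icc.const_mul _) hc2.integrableOn_Icc measurableSet_Icc
        intro u hu
        have := kK_ge hm hS0 hSt' hu.1
        rw [← mul_assoc]
        gcongr

lemma c_nonneg {m S : ℝ} (hm : 0 < m) (hS : 1 < S) :
    0 ≤ (S / (S + m)) ^ 3 * (2 * (arctan √S - arctan (√S)⁻¹)) := by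
  have hS0 : 0 < S := by linarith
  have h1 : 1 ≤ √S := Real.one_le_sqrt.2 hS.le
  have h : arctan (√S)⁻¹ ≤ arctan √S := by
    apply arctan_strictMono.monotone
    exact (inv_le_one_of_one_le₀ h1).trans h1
  have : 0 ≤ arctan √S - arctan (√S)⁻¹ := by linarith
  positivity

lemma c_le {m S : ℝ} (hm : 0 < m) (hS : 1 < S) :
    (S / (S + m)) ^ 3 * (2 * (arctan √S - arctan (√S)⁻¹)) ≤ ‖opA m hm‖ := by
  have hc0 := c_nonneg hm hS
  set c := (S / (S + m)) ^ 3 * (2 * (arctan √S - arctan (√S)⁻¹)) with hc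
  have hS0 : 0 < S := by linarith
  have hlog : 0 < log S := Real.log_pos hS
  have main : ∀ n : ℕ, c ^ 2 * n ≤ ‖opA m hm‖ ^ 2 * (n + 2) := by
    intro n
    have hS2 : 0 < S ^ 2 := by positivity
    set φ : HP := (gT_memLp (S ^ (n + 3)) hS0).toLp _ with hφ
    set ψ : HP := (gT_memLp (S ^ (n + 2)) hS2).toLp _ with hψ
    have nφ : ‖φ‖ ^ 2 = (n + 2) * log S := by
      rw [hφ, gT_norm hS0 (le_self_pow₀ hS.le (by omega)), pow_succ, mul_div_assoc, div_self hS0.ne',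
        mul_one, Real.log_pow]; push_cast; ring
    have nψ : ‖ψ‖ ^ 2 = n * log S := by
      rw [hψ, gT_norm hS2 (pow_le_pow_right₀ hS.le (by omega)), pow_add, mul_div_assoc, div_self hS2.ne',
        mul_one, Real.log_pow]
    have h1 : ‖c • ψ‖ ≤ ‖opA m hm φ‖ := by
      apply Lp.norm_le_norm_of_ae_le
      filter_upwards [Lp.coeFn_smul c ψ, opA_coe hm φ, (gT_memLp (S ^ (n + 2)) hS2).coeFn_toLp] with t h1 h2 h3
      rw [h1, h2, Pi.smul_apply, h3]
      have e : ∫ u, kK m t u * φ u ∂nuP = ∫ u, kK m t u * gT S (S ^ (n + 3)) u ∂nuP := by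
        apply integral_congr_ae
        filter_upwards [(gT_memLp (S ^ (n + 3)) hS0).coeFn_toLp] with u hu
        rw [hu]
      rw [e]
      by_cases h : t ∈ Icc (S ^ 2) (S ^ (n + 2))
      · have hp := pt_lower (b := S ^ (n + 3)) hm hS h.1 (by
          rw [pow_succ S (n + 2)]; exact mul_le_mul_of_nonneg_right h.2 hS0.le)
        rw [← hc] at hp
        simp only [gT, indicator_of_mem h, smul_eq_mul]
        rw [Real.norm_of_nonneg (by positivity)]
        exact hp.trans (le_abs_self _)
      · simp [gT, indicator_of_notMem h]
    have h2 := h1.trans ((opA m hm).le_opNorm φ)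
    rw [norm_smul, Real.norm_of_nonneg hc0] at h2
    have h3 := pow_le_pow_left₀ (by positivity) h2 2
    rw [mul_pow c, mul_pow ‖opA m hm‖, nφ, nψ] at h3
    have h4 : (c ^ 2 * n) * log S ≤ (‖opA m hm‖ ^ 2 * (n + 2)) * log S := by linarith
    exact le_of_mul_le_mul_right h4 hlog
  have hsq : c ^ 2 ≤ ‖opA m hm‖ ^ 2 := by
    by_contra hlt
    push Not at hlt
    obtain ⟨n, hn⟩ := exists_nat_gt (2 * ‖opA m hm‖ ^ 2 / (c ^ 2 - ‖opA m hm‖ ^ 2))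
    rw [div_lt_iff₀ (by linarith)] at hn
    have := main n
    linarith
  exact (sq_le_sq₀ hc0 (norm_nonneg _)).1 hsq

lemma c_tendsto {m : ℝ} :
    Filter.Tendsto (fun S : ℝ => (S / (S + m)) ^ 3 * (2 * (arctan √S - arctan (√S)⁻¹)))
      Filter.atTop (nhds π) := by
  have h1 : Filter.Tendsto (fun S : ℝ => S / (S + m)) Filter.atTop (nhds 1) := by
    have h : Filter.Tendsto (fun S : ℝ => 1 - m * (S + m)⁻¹) Filter.atTop (nhds (1 - m * 0)) :=
      tendsto_const_nhds.sub (tendsto_const_nhds.mul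
        (tendsto_inv_atTop_zero.comp (Filter.tendsto_atTop_add_const_right _ m Filter.tendsto_id)))
    rw [mul_zero, sub_zero] at h
    refine h.congr' ?_
    filter_upwards [Filter.eventually_gt_atTop (-m)] with S hS
    have : S + m ≠ 0 := by linarith
    field_simp
    ring
  have h2 : Filter.Tendsto (fun S : ℝ => arctan √S) Filter.atTop (nhds (π / 2)) :=
    (tendsto_arctan_atTop.mono_right nhdsWithin_le_nhds).comp Real.tendsto_sqrt_atTop
  have h3 : Filter.Tendsto (fun S : ℝ => arctan (√S)⁻¹) Filter.atTop (nhds (arctan 0)) :=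
    (Real.continuous_arctan.tendsto 0).comp (tendsto_inv_atTop_zero.comp Real.tendsto_sqrt_atTop)
  have h := (h1.pow 3).mul ((h2.sub h3).const_mul 2)
  convert h using 2
  simp
  ring

theorem symmetrised_operator_norm (μ : ℝ) (hμ : 0 < μ) :
    ∃ A : Lp ℝ 2 (volume.restrict (Set.Ioi (0:ℝ))) →L[ℝ]
          Lp ℝ 2 (volume.restrict (Set.Ioi (0:ℝ))),
      (∀ φ : Lp ℝ 2 (volume.restrict (Set.Ioi (0:ℝ))),
        (A φ : ℝ → ℝ) =ᵐ[volume.restrict (Set.Ioi (0:ℝ))]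
          fun t => ∫ u in Set.Ioi (0:ℝ),
            (t * u / ((t + μ^2) * (t + u + μ^2) * (u + μ^2))) * φ u) ∧
      (∀ φ ψ : Lp ℝ 2 (volume.restrict (Set.Ioi (0:ℝ))), ⟪A φ, ψ⟫ = ⟪φ, A ψ⟫) ∧
      (∀ φ : Lp ℝ 2 (volume.restrict (Set.Ioi (0:ℝ))), 0 ≤ ⟪A φ, φ⟫) ∧
      ‖A‖ = π := by
  have hm : 0 < μ ^ 2 := by positivity
  refine ⟨opA (μ ^ 2) hm, fun φ => opA_coe hm φ, opA_symm hm, opA_pos hm,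
    le_antisymm (opA_norm_le hm) ?_⟩
  refine le_of_tendsto (c_tendsto (m := μ ^ 2)) ?_
  filter_upwards [Filter.eventually_gt_atTop 1] with S hS
  exact c_le hm hS
end

section
/- Let α ∈ (0,1). For every x ≥ 0 the series Σ_{n=0}^∞ α^{2n} A_n(x) converges absolutely and equals G_α(x) := ₂F₁(α, −α; 1; −x), where G_α(x) = (1/(Γ(α)Γ(1−α))) ∫₀¹ u^{α−1}(1−u)^{−α}(1+xu)^{α} du. -/
open MeasureTheory Real Set

/-- The hyperlogarithm `Hlog(x,[0,-1,…,0,-1])` with `n` alternating letter pairs `(0,-1)`,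
defined recursively together with `Bfun`. -/
noncomputable def Afun : ℕ → ℝ → ℝ
  | 0 => fun _ => 1
  | n+1 => fun x => ∫ t in (0:ℝ)..x, (∫ s in (0:ℝ)..t, Afun n s / (1 + s)) / t

/-- The hyperlogarithm `Hlog(x,[-1,0,-1,…,0,-1])`: the letter `-1` followed by `n`
alternating pairs `(0,-1)`. -/
noncomputable def Bfun (n : ℕ) (x : ℝ) : ℝ := ∫ t in (0:ℝ)..x, Afun n t / (1 + t)

/-- The Gauss hypergeometric function `₂F₁(α, -α; 1; -x)` via its Euler integral. -/
noncomputable def Ghyp (α x : ℝ) : ℝ :=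
  (1 / (Real.Gamma α * Real.Gamma (1 - α))) *
    ∫ u in (0:ℝ)..1, u ^ (α - 1) * (1 - u) ^ (-α) * (1 + x * u) ^ α

noncomputable def Tinn (f : ℝ → ℝ) (t : ℝ) : ℝ := ∫ s in (0:ℝ)..t, f s / (1 + s)
noncomputable def HTop (f : ℝ → ℝ) (x : ℝ) : ℝ := ∫ t in (0:ℝ)..x, Tinn f t / t

lemma cont_div {f : ℝ → ℝ} (hf : ContinuousOn f (Ici 0)) :
    ContinuousOn (fun s => f s / (1 + s)) (Ici 0) := by
  refine hf.div (by fun_prop) ?_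
  intro s hs
  have : (0:ℝ) ≤ s := hs
  positivity

lemma int_div {f : ℝ → ℝ} (hf : ContinuousOn f (Ici 0)) {x : ℝ} (hx : 0 ≤ x) :
    IntervalIntegrable (fun s => f s / (1 + s)) volume 0 x := by
  apply ContinuousOn.intervalIntegrable
  rw [uIcc_of_le hx]
  exact (cont_div hf).mono Icc_subset_Ici_self

lemma Tinn_bound {f : ℝ → ℝ} {X M : ℝ} {n : ℕ} (h : ∀ s ∈ Icc 0 X, |f s| ≤ M * s ^ n)
    {t : ℝ} (ht : t ∈ Icc 0 X) : |Tinn f t| ≤ M * t ^ (n+1) / (n+1) := by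
  have h1 : ∫ s in (0:ℝ)..t, M * s ^ n = M * t ^ (n+1) / (n+1) := by
    rw [intervalIntegral.integral_const_mul, integral_pow]
    simp; ring
  rw [← h1, ← Real.norm_eq_abs, Tinn]
  refine intervalIntegral.norm_integral_le_of_norm_le ht.1 ?_ ?_
  swap
  · exact Continuous.intervalIntegrable (by fun_prop) _ _
  refine Filter.Eventually.of_forall fun s hs => ?_
  have h2 := h s ⟨hs.1.le, hs.2.trans ht.2⟩
  rw [Real.norm_eq_abs, abs_div, abs_of_pos (by linarith [hs.1] : 0 < 1 + s)]
  exact (div_le_self (abs_nonneg _) (by linarith [hs.1])).trans h2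

lemma Tinn_cont {f : ℝ → ℝ} (hf : ContinuousOn f (Ici 0)) {x : ℝ} (hx : 0 ≤ x) :
    ContinuousOn (Tinn f) (Icc 0 x) := by
  have := intervalIntegral.continuousOn_primitive_interval' (int_div hf hx) left_mem_uIcc
  rwa [uIcc_of_le hx] at this

lemma Tinn_div_bound {f : ℝ → ℝ} {X M : ℝ} {n : ℕ} (h : ∀ s ∈ Icc 0 X, |f s| ≤ M * s ^ n)
    {t : ℝ} (ht : t ∈ Ioc 0 X) : |Tinn f t / t| ≤ M / (n+1) * t ^ n := by
  have h2 := Tinn_bound h (Ioc_subset_Icc_self ht)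
  rw [abs_div, abs_of_pos ht.1, div_le_iff₀ ht.1]
  refine h2.trans (le_of_eq ?_)
  ring

lemma int_Tinn {f : ℝ → ℝ} (hf : ContinuousOn f (Ici 0)) {x : ℝ} (hx : 0 ≤ x) :
    IntervalIntegrable (fun t => Tinn f t / t) volume 0 x := by
  obtain ⟨M, hM⟩ := (isCompact_Icc (a := (0:ℝ)) (b := x)).exists_bound_of_continuousOn
    (hf.mono Icc_subset_Ici_self)
  rw [intervalIntegrable_iff_integrableOn_Ioc_of_le hx]
  refine ⟨?_, .restrict_of_bounded (C := M) measure_Ioc_lt_top ?_⟩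
  · refine ContinuousOn.aestronglyMeasurable ?_ measurableSet_Ioc
    refine ((Tinn_cont hf hx).mono Ioc_subset_Icc_self).div continuousOn_id ?_
    intro t ht
    exact ht.1.ne'
  · rw [ae_restrict_iff' measurableSet_Ioc]
    refine Filter.Eventually.of_forall fun t ht => ?_
    have := Tinn_div_bound (f := f) (M := M) (n := 0) (X := x)
      (fun s hs => by simpa using hM s hs) ht
    simpa only [Real.norm_eq_abs, Nat.cast_zero, zero_add, div_one, pow_zero, mul_one] using this

lemma HTop_cont {f : ℝ → ℝ} (hf : ContinuousOn f (Ici 0)) : ContinuousOn (HTop f) (Ici 0) := by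
  intro x hx
  have hx' : (0:ℝ) ≤ x := hx
  have := intervalIntegral.continuousOn_primitive_interval'
    (int_Tinn hf (by linarith : 0 ≤ x + 1)) left_mem_uIcc
  rw [uIcc_of_le (by linarith : 0 ≤ x + 1)] at this
  refine (this x ⟨hx', by linarith⟩).mono_of_mem_nhdsWithin ?_
  have : Icc 0 (x+1) = Ici 0 ∩ Iic (x+1) := rfl
  rw [this]
  exact Filter.inter_mem self_mem_nhdsWithin
    (mem_nhdsWithin_of_mem_nhds (Iic_mem_nhds (by linarith)))

lemma HTop_bound {f : ℝ → ℝ} {X M : ℝ} {n : ℕ} (h : ∀ s ∈ Icc 0 X, |f s| ≤ M * s ^ n)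
    {t : ℝ} (ht : t ∈ Icc 0 X) : |HTop f t| ≤ M / (n+1)^2 * t ^ (n+1) := by
  have h1 : ∫ s in (0:ℝ)..t, M / (n+1) * s ^ n = M / (n+1)^2 * t ^ (n+1) := by
    rw [intervalIntegral.integral_const_mul, integral_pow]
    simp; field_simp
  rw [← h1, ← Real.norm_eq_abs, HTop]
  refine intervalIntegral.norm_integral_le_of_norm_le ht.1 ?_ ?_
  swap
  · exact Continuous.intervalIntegrable (by fun_prop) _ _
  refine Filter.Eventually.of_forall fun s hs => ?_
  exact Tinn_div_bound h ⟨hs.1, hs.2.trans ht.2⟩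

lemma HTop_sub {f g : ℝ → ℝ} (hf : ContinuousOn f (Ici 0)) (hg : ContinuousOn g (Ici 0)) (c : ℝ)
    {x : ℝ} (hx : 0 ≤ x) : HTop (fun s => f s - c * g s) x = HTop f x - c * HTop g x := by
  unfold HTop
  rw [← intervalIntegral.integral_const_mul, ← intervalIntegral.integral_sub (int_Tinn hf hx)
    ((int_Tinn hg hx).const_mul c)]
  refine intervalIntegral.integral_congr fun t ht => ?_
  rw [uIcc_of_le hx] at ht
  have : Tinn (fun s => f s - c * g s) t = Tinn f t - c * Tinn g t := by
    unfold Tinn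
    rw [← intervalIntegral.integral_const_mul, ← intervalIntegral.integral_sub (int_div hf ht.1)
      ((int_div hg ht.1).const_mul c)]
    congr 1
    ext s
    ring
  simp only [this]
  ring

lemma Afun_succ (n : ℕ) : Afun (n+1) = HTop (Afun n) := by
  ext x
  simp [Afun, HTop, Tinn]

lemma Afun_cont (n : ℕ) : ContinuousOn (Afun n) (Ici 0) := by
  induction n with
  | zero => simp only [Afun]; fun_prop
  | succ n ih => rw [Afun_succ]; exact HTop_cont ih

lemma Afun_bound (n : ℕ) : ∀ x, 0 ≤ x → |Afun n x| ≤ 1 / (n.factorial : ℝ)^2 * x ^ n := by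
  induction n with
  | zero => intro x hx; simp [Afun]
  | succ n ih =>
    intro x hx
    rw [Afun_succ]
    refine (HTop_bound (X := x) (fun s hs => ih s hs.1) ⟨hx, le_rfl⟩).trans (le_of_eq ?_)
    rw [Nat.factorial_succ]; push_cast
    field_simp

lemma series_of_fixed {α : ℝ} (hα : α ∈ Ioo (0:ℝ) 1) {G : ℝ → ℝ} (hG : ContinuousOn G (Ici 0))
    (hfix : ∀ x, 0 ≤ x → G x = 1 + α^2 * HTop G x) {x : ℝ} (hx : 0 ≤ x) :
    Summable (fun n : ℕ => |α ^ (2*n) * Afun n x|) ∧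
    ∑' n : ℕ, α ^ (2*n) * Afun n x = G x := by
  have hsum : Summable (fun n : ℕ => |α ^ (2*n) * Afun n x|) := by
    refine Summable.of_nonneg_of_le (fun _ => abs_nonneg _) (fun n => ?_)
      (Real.summable_pow_div_factorial x)
    rw [abs_mul, abs_of_nonneg (pow_nonneg hα.1.le _)]
    have h1 : α ^ (2*n) ≤ 1 := pow_le_one₀ hα.1.le hα.2.le
    have h2 := Afun_bound n x hx
    have h3 : (1:ℝ) ≤ n.factorial := by exact_mod_cast n.factorial_pos
    calc α ^ (2*n) * |Afun n x| ≤ 1 * (1 / (n.factorial : ℝ)^2 * x ^ n) := by gcongr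
      _ ≤ 1 * (1 / (n.factorial : ℝ) * x ^ n) := by
        gcongr
        nlinarith
      _ = _ := by ring
  refine ⟨hsum, ?_⟩
  let R : ℕ → ℝ → ℝ := fun N y => G y - ∑ n ∈ Finset.range N, α ^ (2*n) * Afun n y
  have hRs : ∀ N y, R (N+1) y = R N y - α ^ (2*N) * Afun N y := by
    intro N y
    simp only [R, Finset.sum_range_succ]; ring
  have hRc : ∀ N, ContinuousOn (R N) (Ici 0) := by
    intro N
    refine hG.sub (continuousOn_finsetSum _ fun n _ => ?_)
    exact (Afun_cont n).const_mul _
  have hRT : ∀ N y, 0 ≤ y → R (N+1) y = α^2 * HTop (R N) y := by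
    intro N
    induction N with
    | zero =>
      intro y hy
      have h0 : R 0 = G := by ext; simp [R]
      rw [hRs, h0, hfix y hy]; simp [Afun]
    | succ N ih =>
      intro y hy
      rw [hRs, ih y hy, Afun_succ]
      have : R (N+1) = fun s => R N s - α ^ (2*N) * Afun N s := by ext s; exact hRs N s
      rw [this, HTop_sub (hRc N) (Afun_cont N) _ hy]
      ring
  obtain ⟨M, hM⟩ := (isCompact_Icc (a := (0:ℝ)) (b := x)).exists_bound_of_continuousOn
    (hG.mono Icc_subset_Ici_self)
  have hM0 : 0 ≤ M := (norm_nonneg _).trans (hM 0 ⟨le_rfl, hx⟩)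
  have hRb : ∀ N, ∀ y ∈ Icc 0 x, |R N y| ≤ M / (N.factorial : ℝ)^2 * y ^ N := by
    intro N
    induction N with
    | zero => intro y hy; simpa [R] using hM y hy
    | succ N ih =>
      intro y hy
      have h1 := HTop_bound ih hy
      rw [hRT N y hy.1, abs_mul, abs_of_nonneg (by positivity)]
      have h2 : α^2 ≤ 1 := pow_le_one₀ hα.1.le hα.2.le
      refine (mul_le_mul h2 h1 (abs_nonneg _) zero_le_one).trans (le_of_eq ?_)
      rw [Nat.factorial_succ]; push_cast
      field_simp
  have hlim : Filter.Tendsto (fun N => R N x) Filter.atTop (nhds 0) := by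
    have h0 : Filter.Tendsto (fun N : ℕ => M * (x ^ N / N.factorial)) Filter.atTop (nhds 0) := by
      simpa using (FloorSemiring.tendsto_pow_div_factorial_atTop x).const_mul M
    refine squeeze_zero_norm (fun N => ?_) h0
    refine (hRb N x ⟨hx, le_rfl⟩).trans ?_
    have h3 : (1:ℝ) ≤ N.factorial := by exact_mod_cast N.factorial_pos
    have : M / (N.factorial : ℝ)^2 * x ^ N ≤ M / (N.factorial : ℝ) * x ^ N := by
      gcongr
      nlinarith
    refine this.trans (le_of_eq (by ring))
  have hs := (hsum.of_abs).hasSum.tendsto_sum_nat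
  have h5 : Filter.Tendsto (fun N => ∑ n ∈ Finset.range N, α ^ (2*n) * Afun n x)
      Filter.atTop (nhds (G x)) := by
    have := (tendsto_const_nhds (x := G x)).sub hlim
    simpa [R] using this
  exact tendsto_nhds_unique hs h5

noncomputable def wt (α u : ℝ) : ℝ := u ^ (α - 1) * (1 - u) ^ (-α)

lemma wt_complex (α : ℝ) {u : ℝ} (hu : u ∈ Icc (0:ℝ) 1) :
    (u:ℂ) ^ ((α:ℂ) - 1) * (1 - (u:ℂ)) ^ (((1 - α : ℝ):ℂ) - 1) = ((wt α u : ℝ) : ℂ) := by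
  unfold wt
  rw [Complex.ofReal_mul, Complex.ofReal_cpow hu.1, Complex.ofReal_cpow (by linarith [hu.2])]
  push_cast
  congr 2
  ring

lemma wt_int {α : ℝ} (hα : α ∈ Ioo (0:ℝ) 1) : IntervalIntegrable (wt α) volume 0 1 := by
  have h := Complex.betaIntegral_convergent (u := (α:ℂ)) (v := ((1 - α : ℝ):ℂ))
    (by simpa using hα.1) (by rw [Complex.ofReal_re]; linarith [hα.2])
  rw [intervalIntegrable_iff_integrableOn_Ioc_of_le zero_le_one] at h ⊢
  have h2 := h.re
  refine (integrableOn_congr_fun ?_ measurableSet_Ioc).mp h2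
  intro u hu
  simp only
  rw [wt_complex α (Ioc_subset_Icc_self hu)]
  simp

lemma wt_integral {α : ℝ} (hα : α ∈ Ioo (0:ℝ) 1) :
    ∫ u in (0:ℝ)..1, wt α u = Real.Gamma α * Real.Gamma (1 - α) := by
  have h := ProbabilityTheory.beta_eq_betaIntegralReal α (1 - α) hα.1 (by linarith [hα.2])
  have h1 : Complex.betaIntegral (α:ℂ) ((1 - α : ℝ):ℂ) = ((∫ u in (0:ℝ)..1, wt α u : ℝ) : ℂ) := by
    rw [Complex.betaIntegral, ← intervalIntegral.integral_ofReal]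
    refine intervalIntegral.integral_congr fun u hu => ?_
    rw [uIcc_of_le zero_le_one] at hu
    exact wt_complex α hu
  rw [h1, Complex.ofReal_re] at h
  rw [← h, ProbabilityTheory.beta]
  simp

noncomputable def Jf (α : ℝ) (k : ℕ) (β y : ℝ) : ℝ :=
  ∫ u in (0:ℝ)..1, wt α u * (u ^ k * (1 + y * u) ^ β)

lemma base_pos {y u : ℝ} (hy : -1 < y) (hu : u ∈ Icc (0:ℝ) 1) : 0 < 1 + y * u := by
  nlinarith [hu.1, hu.2, mul_nonneg hu.1 (by linarith : 0 ≤ 1 + y)]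

lemma J_int {α : ℝ} (hα : α ∈ Ioo (0:ℝ) 1) (k : ℕ) (β : ℝ) {y : ℝ} (hy : -1 < y) :
    IntervalIntegrable (fun u => wt α u * (u ^ k * (1 + y * u) ^ β)) volume 0 1 := by
  refine (wt_int hα).mul_continuousOn ?_
  rw [uIcc_of_le zero_le_one]
  refine ContinuousOn.mul (by fun_prop) (ContinuousOn.rpow_const (by fun_prop) ?_)
  intro u hu
  exact Or.inl (base_pos hy hu).ne'

lemma J_deriv {α : ℝ} (hα : α ∈ Ioo (0:ℝ) 1) (k : ℕ) (β : ℝ) {x : ℝ} (hx : 0 ≤ x) :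
    HasDerivAt (Jf α k β) (β * Jf α (k+1) (β-1) x) x := by
  have hc : ContinuousOn (fun p : ℝ × ℝ => β * (p.2 ^ (k+1) * (1 + p.1 * p.2) ^ (β-1)))
      (Icc (x - 1/2) (x + 1/2) ×ˢ Icc 0 1) := by
    refine ContinuousOn.mul (by fun_prop) (ContinuousOn.mul (by fun_prop)
      (ContinuousOn.rpow_const (by fun_prop) ?_))
    intro p hp
    exact Or.inl (base_pos (by linarith [hp.1.1]) hp.2).ne'
  obtain ⟨C, hC⟩ := (isCompact_Icc.prod isCompact_Icc).exists_bound_of_continuousOn hc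
  have hC0 : 0 ≤ C := (norm_nonneg _).trans
    (hC (x, 0) ⟨⟨by simp, by simp⟩, ⟨le_rfl, zero_le_one⟩⟩)
  have hs : Icc (x - 1/2) (x + 1/2) ∈ nhds x := Icc_mem_nhds (by linarith) (by linarith)
  have key := intervalIntegral.hasDerivAt_integral_of_dominated_loc_of_deriv_le
    (μ := volume) (a := 0) (b := 1) (x₀ := x) (s := Icc (x - 1/2) (x + 1/2))
    (F := fun y u => wt α u * (u ^ k * (1 + y * u) ^ β))
    (F' := fun y u => wt α u * (β * (u ^ (k+1) * (1 + y * u) ^ (β-1))))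
    (bound := fun u => |wt α u| * C) hs ?_ (J_int hα k β (by linarith)) ?_ ?_ ?_ ?_
  · have h2 := key.2
    refine h2.congr_deriv ?_
    unfold Jf
    rw [← intervalIntegral.integral_const_mul]
    congr 1
    ext u
    ring
  · filter_upwards [hs] with y hy
    exact (J_int hα k β (by linarith [hy.1])).def'.aestronglyMeasurable
  · have := ((J_int hα (k+1) (β-1) (by linarith : -1 < x)).const_mul β).def'.aestronglyMeasurable
    convert this using 2
    ring
  · refine Filter.Eventually.of_forall fun u hu y hy => ?_
    rw [uIoc_of_le zero_le_one] at hu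
    rw [norm_mul]
    exact mul_le_mul_of_nonneg_left (hC (y, u) ⟨hy, Ioc_subset_Icc_self hu⟩) (norm_nonneg _)
  · exact (wt_int hα).abs.mul_const C
  · refine Filter.Eventually.of_forall fun u hu y hy => ?_
    rw [uIoc_of_le zero_le_one] at hu
    have hb := base_pos (by linarith [hy.1] : -1 < y) (Ioc_subset_Icc_self hu)
    have h1 : HasDerivAt (fun y : ℝ => 1 + y * u) u y := by
      simpa using ((hasDerivAt_id y).mul_const u).const_add 1
    have h2 := ((h1.rpow_const (p := β) (Or.inl hb.ne')).const_mul (u^k)).const_mul (wt α u)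
    refine h2.congr_deriv ?_
    ring

lemma J_ident {α : ℝ} (hα : α ∈ Ioo (0:ℝ) 1) {x : ℝ} (hx : 0 ≤ x) :
    (1 + x) * (α * Jf α 1 (α-1) x + x * (α * ((α-1) * Jf α 2 (α-1-1) x)))
      = α^2 * Jf α 0 α x := by
  have hx1 : -1 < x := by linarith
  have i1 := J_int hα 1 (α-1) hx1
  have i2 := J_int hα 2 (α-1-1) hx1
  have i0 := J_int hα 0 α hx1
  have I := (((i1.const_mul ((1+x)*α)).add (i2.const_mul ((1+x)*x*α*(α-1)))).sub
    (i0.const_mul (α^2)))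
  have hft := intervalIntegral.integral_eq_sub_of_hasDerivAt_of_le (a := 0) (b := 1)
    (f := fun u => -α * (u ^ α * (1-u)^(1-α) * (1 + x*u)^(α-1))) zero_le_one ?_ ?_ I
  · rw [intervalIntegral.integral_sub ((i1.const_mul _).add (i2.const_mul _)) (i0.const_mul _),
      intervalIntegral.integral_add (i1.const_mul _) (i2.const_mul _)] at hft
    simp only [intervalIntegral.integral_const_mul] at hft
    rw [Real.zero_rpow hα.1.ne', sub_self, Real.zero_rpow (by linarith [hα.2])] at hft
    unfold Jf
    linear_combination hft
  · refine ContinuousOn.mul (by fun_prop) (ContinuousOn.mul (ContinuousOn.mul ?_ ?_) ?_)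
    · exact ContinuousOn.rpow_const (by fun_prop) fun u hu => Or.inr hα.1.le
    · exact ContinuousOn.rpow_const (by fun_prop) fun u hu => Or.inr (by linarith [hα.2])
    · exact ContinuousOn.rpow_const (by fun_prop) fun u hu => Or.inl (base_pos hx1 hu).ne'
  · intro u hu
    have hb := base_pos hx1 (Ioo_subset_Icc_self hu)
    have hu0 : 0 < u := hu.1
    have hu1 : 0 < 1 - u := by linarith [hu.2]
    have h1 : HasDerivAt (fun u : ℝ => 1 + x * u) x u := by
      simpa using ((hasDerivAt_id u).const_mul x).const_add 1
    have h2 : HasDerivAt (fun u : ℝ => 1 - u) (-1) u := by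
      simpa using (hasDerivAt_id u).const_sub 1
    have d1 := (hasDerivAt_id u).rpow_const (p := α) (Or.inl hu0.ne')
    have d2 := h2.rpow_const (p := 1-α) (Or.inl hu1.ne')
    have d3 := h1.rpow_const (p := α-1) (Or.inl hb.ne')
    have d := ((d1.mul d2).mul d3).const_mul (-α)
    refine d.congr_deriv ?_
    simp only [id, wt, Pi.mul_apply]
    have e1 : u ^ α = u ^ (α-1) * u := by
      rw [Real.rpow_sub_one hu0.ne']; field_simp
    have e2 : (1-u) ^ (1-α) = (1-u) ^ (-α) * (1-u) := by
      rw [show 1 - α = -α + 1 by ring, Real.rpow_add_one hu1.ne']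
    have e2' : (1-u) ^ (1-α-1) = (1-u) ^ (-α) := by congr 1; ring
    have e3 : (1+x*u) ^ (α-1) = (1+x*u) ^ (α-1-1) * (1+x*u) := by
      rw [Real.rpow_sub_one hb.ne' (α-1)]; field_simp
    have e4 : (1+x*u) ^ α = (1+x*u) ^ (α-1-1) * (1+x*u) * (1+x*u) := by
      rw [← e3, Real.rpow_sub_one hb.ne' α]; field_simp
    rw [e1, e2, e2', e4, e3]
    ring

lemma Ghyp_eq (α x : ℝ) : Ghyp α x = (1 / (Real.Gamma α * Real.Gamma (1 - α))) * Jf α 0 α x := by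
  simp [Ghyp, Jf, wt]

lemma Ghyp_zero {α : ℝ} (hα : α ∈ Ioo (0:ℝ) 1) : Ghyp α 0 = 1 := by
  have h1 := Real.Gamma_pos_of_pos hα.1
  have h2 := Real.Gamma_pos_of_pos (by linarith [hα.2] : 0 < 1 - α)
  have : Jf α 0 α 0 = Real.Gamma α * Real.Gamma (1 - α) := by
    rw [← wt_integral hα]; simp [Jf]
  rw [Ghyp_eq, this]
  field_simp

lemma Ghyp_cont {α : ℝ} (hα : α ∈ Ioo (0:ℝ) 1) : ContinuousOn (Ghyp α) (Ici 0) := by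
  have : Ghyp α = fun x => (1 / (Real.Gamma α * Real.Gamma (1 - α))) * Jf α 0 α x := by
    ext x; exact Ghyp_eq α x
  rw [this]
  intro x hx
  exact ((J_deriv hα 0 α hx).const_mul _).continuousAt.continuousWithinAt

lemma Ghyp_fix {α : ℝ} (hα : α ∈ Ioo (0:ℝ) 1) {x : ℝ} (hx : 0 ≤ x) :
    Ghyp α x = 1 + α^2 * HTop (Ghyp α) x := by
  set c := (1 / (Real.Gamma α * Real.Gamma (1 - α))) with hc
  have hG : Ghyp α = fun x => c * Jf α 0 α x := by
    ext x; exact Ghyp_eq α x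
  have hGd : ∀ y, 0 ≤ y → HasDerivAt (Ghyp α) (c * (α * Jf α 1 (α-1) y)) y := by
    intro y hy
    rw [hG]; exact (J_deriv hα 0 α hy).const_mul c
  have hG'd : ∀ y, 0 ≤ y → HasDerivAt (fun y => c * (α * Jf α 1 (α-1) y))
      (c * (α * ((α-1) * Jf α 2 (α-1-1) y))) y := by
    intro y hy
    exact ((J_deriv hα 1 (α-1) hy).const_mul α).const_mul c
  have hHd : ∀ y, 0 ≤ y → HasDerivAt (fun y => y * (c * (α * Jf α 1 (α-1) y)))
      (α^2 * (Ghyp α y / (1 + y))) y := by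
    intro y hy
    refine ((hasDerivAt_id y).mul (hG'd y hy)).congr_deriv ?_
    have h := J_ident hα hy
    have hy1 : 1 + y ≠ 0 := by positivity
    rw [hG]
    simp only [id]
    field_simp
    linear_combination c * h
  have hH : ∀ y, 0 ≤ y → α^2 * Tinn (Ghyp α) y = y * (c * (α * Jf α 1 (α-1) y)) := by
    intro y hy
    unfold Tinn
    rw [← intervalIntegral.integral_const_mul,
      intervalIntegral.integral_eq_sub_of_hasDerivAt (f := fun y => y * (c * (α * Jf α 1 (α-1) y)))]
    · simp
    · intro z hz
      rw [uIcc_of_le hy] at hz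
      exact hHd z hz.1
    · exact (int_div (Ghyp_cont hα) hy).const_mul _
  have hint : ∫ y in (0:ℝ)..x, c * (α * Jf α 1 (α-1) y) = Ghyp α x - Ghyp α 0 := by
    apply intervalIntegral.integral_eq_sub_of_hasDerivAt
    · intro z hz
      rw [uIcc_of_le hx] at hz
      exact hGd z hz.1
    · apply ContinuousOn.intervalIntegrable
      intro z hz
      rw [uIcc_of_le hx] at hz
      exact (hG'd z hz.1).continuousAt.continuousWithinAt
  have hT : α^2 * HTop (Ghyp α) x = ∫ y in (0:ℝ)..x, c * (α * Jf α 1 (α-1) y) := by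
    unfold HTop
    rw [← intervalIntegral.integral_const_mul]
    refine intervalIntegral.integral_congr_ae (Filter.Eventually.of_forall fun t ht => ?_)
    rw [uIoc_of_le hx] at ht
    have ht0 : t ≠ 0 := ht.1.ne'
    rw [← mul_div_assoc, hH t ht.1.le]
    field_simp
  rw [hT, hint, Ghyp_zero hα]
  ring

theorem hyperlog_series_A (α : ℝ) (hα : α ∈ Set.Ioo (0:ℝ) 1) (x : ℝ) (hx : 0 ≤ x) :
    Summable (fun n : ℕ => |α ^ (2*n) * Afun n x|) ∧
    ∑' n : ℕ, α ^ (2*n) * Afun n x = Ghyp α x :=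
  series_of_fixed hα (Ghyp_cont hα) (fun _ hy => Ghyp_fix hα hy) hx
end

section
/- For every α ∈ (0,1), the integral ∫₀^∞ t·F_α(t)/(1+t)³ dt converges absolutely and equals π·α(1−α)/(2 sin(πα)). Equivalently, with λ = sin(πα)/π and the renormalisation parameter μ² = α(1−α)/λ, the deformed measure ρ_λ(t) = t·F_α(t/μ²) satisfies the normalisation condition ∫₀^∞ ρ_λ(t)/(t+μ²)³ dt = 1/2. -/
open MeasureTheory Real Set

/-- The Gauss hypergeometric function `₂F₁(α, 1-α; 2; -x)` via its Euler integral. -/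
noncomputable def Fhyp (α x : ℝ) : ℝ :=
  (1 / (Real.Gamma (1 - α) * Real.Gamma (1 + α))) *
    ∫ u in (0:ℝ)..1, u ^ (-α) * (1 - u) ^ α * (1 + x * u) ^ (-α)

lemma aux_beta (a b : ℝ) (ha : 0 < a) (hb : 0 < b) :
    ∫ x in (0:ℝ)..1, x ^ (a - 1) * (1 - x) ^ (b - 1) =
      Real.Gamma a * Real.Gamma b / Real.Gamma (a + b) := by
  have h := ProbabilityTheory.beta_eq_betaIntegralReal a b ha hb
  have h2 : Complex.betaIntegral a b
      = ((∫ x in (0:ℝ)..1, x ^ (a - 1) * (1 - x) ^ (b - 1) : ℝ) : ℂ) := by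
    rw [Complex.betaIntegral, ← intervalIntegral.integral_ofReal]
    apply intervalIntegral.integral_congr
    intro x hx
    rw [uIcc_of_le zero_le_one] at hx
    simp only
    rw [Complex.ofReal_mul, Complex.ofReal_cpow hx.1, Complex.ofReal_cpow (by linarith [hx.2])]
    push_cast
    rfl
  rw [h2, Complex.ofReal_re] at h
  rw [← h, ProbabilityTheory.beta]

/-- integrand in the coordinates (v, s). -/
noncomputable def hAux (α v s : ℝ) : ℝ :=
  (v - s) ^ (-α) * s ^ α * (1 - v) ^ α * (1 - s) ^ (-α)

noncomputable def fAux (α v s : ℝ) : ℝ := if s < v then hAux α v s else 0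

lemma aux_v (α v : ℝ) (hv : v ∈ Ioo (0:ℝ) 1) :
    ∫ s in Ioo (0:ℝ) 1, fAux α v s =
      v * ∫ u in (0:ℝ)..1, u ^ (-α) * (1 - u) ^ α * (1 + v / (1 - v) * u) ^ (-α) := by
  obtain ⟨h0, h1⟩ := hv
  have e : ∀ s, fAux α v s = (Iio v).indicator (fun s => hAux α v s) s := by
    intro s; simp [fAux, indicator]
  simp_rw [e]
  rw [setIntegral_indicator measurableSet_Iio]
  have : Ioo (0:ℝ) 1 ∩ Iio v = Ioo 0 v := by
    ext x; simp only [mem_inter_iff, mem_Ioo, mem_Iio]; constructor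
    · rintro ⟨⟨a, b⟩, c⟩; exact ⟨a, c⟩
    · rintro ⟨a, c⟩; exact ⟨⟨a, by linarith⟩, c⟩
  rw [this, ← integral_Ioc_eq_integral_Ioo, ← intervalIntegral.integral_of_le h0.le]
  have k := intervalIntegral.smul_integral_comp_sub_mul (a := 0) (b := 1)
    (fun s => hAux α v s) v v
  simp only [mul_one, sub_self, mul_zero, sub_zero, smul_eq_mul] at k
  rw [← k]
  congr 1
  apply intervalIntegral.integral_congr
  intro u hu
  rw [uIcc_of_le zero_le_one] at hu
  obtain ⟨hu0, hu1⟩ := hu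
  have hv1 : 0 < 1 - v := by linarith
  have hp : 0 < 1 + v / (1 - v) * u := by positivity
  simp only [hAux]
  rw [show v - (v - v * u) = v * u by ring, show v - v * u = v * (1 - u) by ring,
    show 1 - v * (1 - u) = (1 - v) * (1 + v / (1 - v) * u) by field_simp; ring,
    mul_rpow h0.le hu0, mul_rpow h0.le (by linarith), mul_rpow hv1.le hp.le]
  have e1 : v ^ (-α) * v ^ α = 1 := by rw [← rpow_add h0]; simp
  have e2 : (1 - v) ^ (-α) * (1 - v) ^ α = 1 := by rw [← rpow_add hv1]; simp
  linear_combination (u ^ (-α) * (1 - u) ^ α * (1 + v / (1 - v) * u) ^ (-α)) *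
    ((1 - v) ^ (-α) * (1 - v) ^ α * e1 + e2)

lemma aux_s_ind (α s : ℝ) : (fun v => fAux α v s) = (Ioi s).indicator (fun v => hAux α v s) := by
  ext v; simp [fAux, indicator]

lemma aux_s_set (s : ℝ) (hs : s ∈ Ioo (0:ℝ) 1) : Ioo (0:ℝ) 1 ∩ Ioi s = Ioo s 1 := by
  obtain ⟨h0, h1⟩ := hs
  ext x; simp only [mem_inter_iff, mem_Ioo, mem_Ioi]; constructor
  · rintro ⟨⟨a, b⟩, c⟩; exact ⟨c, b⟩
  · rintro ⟨a, c⟩; exact ⟨⟨by linarith, c⟩, a⟩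

lemma aux_s (α s : ℝ) (hα : α ∈ Ioo (0:ℝ) 1) (hs : s ∈ Ioo (0:ℝ) 1) :
    ∫ v in Ioo (0:ℝ) 1, fAux α v s =
      (Real.Gamma (1 - α) * Real.Gamma (1 + α)) * (s ^ α * (1 - s) ^ (1 - α)) := by
  have hset := aux_s_set s hs
  obtain ⟨h0, h1⟩ := hs
  rw [aux_s_ind, setIntegral_indicator measurableSet_Ioi, hset,
    ← integral_Ioc_eq_integral_Ioo, ← intervalIntegral.integral_of_le h1.le]
  have k := intervalIntegral.smul_integral_comp_add_mul (a := 0) (b := 1)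
    (fun v => hAux α v s) (1 - s) s
  simp only [mul_one, mul_zero, add_zero, smul_eq_mul, add_sub_cancel] at k
  rw [← k]
  have hs1 : 0 < 1 - s := by linarith
  have b := aux_beta (1 - α) (1 + α) (by linarith [hα.2]) (by linarith [hα.1])
  rw [show 1 - α + (1 + α) = 2 by ring, Real.Gamma_two, div_one,
    show 1 - α - 1 = -α by ring, show 1 + α - 1 = α by ring] at b
  rw [← b]
  have : ∫ x in (0:ℝ)..1, hAux α (s + (1 - s) * x) s =
      ∫ x in (0:ℝ)..1, (s ^ α * (1 - s) ^ (-α)) * (x ^ (-α) * (1 - x) ^ α) := by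
    apply intervalIntegral.integral_congr
    intro x hx
    rw [uIcc_of_le zero_le_one] at hx
    obtain ⟨hx0, hx1⟩ := hx
    simp only [hAux]
    rw [show s + (1 - s) * x - s = (1 - s) * x by ring,
      show 1 - (s + (1 - s) * x) = (1 - s) * (1 - x) by ring,
      mul_rpow hs1.le hx0, mul_rpow hs1.le (by linarith)]
    have e2 : (1 - s) ^ (-α) * (1 - s) ^ α = 1 := by rw [← rpow_add hs1]; simp
    linear_combination (s ^ α * (1 - s) ^ (-α)) * (x ^ (-α) * (1 - x) ^ α) * e2
  rw [this, intervalIntegral.integral_const_mul]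
  have e3 : (1 - s) ^ (1 - α) = (1 - s) * (1 - s) ^ (-α) := by
    rw [sub_eq_add_neg 1 α, rpow_add hs1, rpow_one]
  rw [e3]; ring

lemma aux_s_int (α s : ℝ) (hα : α ∈ Ioo (0:ℝ) 1) (hs : s ∈ Ioo (0:ℝ) 1) :
    IntegrableOn (fun v => fAux α v s) (Ioo 0 1) := by
  have hset := aux_s_set s hs
  rw [aux_s_ind, integrableOn_indicator_iff measurableSet_Ioi, inter_comm, hset]
  rw [← integrableOn_Ioc_iff_integrableOn_Ioo,
    ← intervalIntegrable_iff_integrableOn_Ioc_of_le hs.2.le]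
  have h1 : IntervalIntegrable (fun x : ℝ => x ^ (-α)) volume 0 (1 - s) :=
    intervalIntegral.intervalIntegrable_rpow' (by linarith [hα.2])
  have h2 := h1.comp_sub_right s
  simp only [zero_add, sub_add_cancel] at h2
  have h3 : ContinuousOn (fun v : ℝ => s ^ α * (1 - v) ^ α * (1 - s) ^ (-α)) (uIcc s 1) := by
    apply Continuous.continuousOn
    have : Continuous (fun v : ℝ => (1 - v) ^ α) :=
      (continuous_const.sub continuous_id).rpow_const (fun _ => Or.inr hα.1.le)
    fun_prop
  refine (h2.mul_continuousOn h3).congr ?_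
  intro v _
  simp only [hAux]; ring

lemma aux_nonneg (α v s : ℝ) (hv : v ∈ Ioo (0:ℝ) 1) (hs : s ∈ Ioo (0:ℝ) 1) :
    0 ≤ fAux α v s := by
  unfold fAux hAux
  split_ifs with h
  · have := rpow_nonneg (sub_nonneg.2 h.le) (-α)
    have := rpow_nonneg (sub_nonneg.2 hv.2.le) (α)
    have := rpow_nonneg (sub_nonneg.2 hs.2.le) (-α)
    have := rpow_nonneg hs.1.le α
    positivity
  · exact le_rfl

lemma aux_meas (α : ℝ) : Measurable (Function.uncurry (fAux α)) := by
  unfold Function.uncurry fAux hAux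
  refine Measurable.ite (measurableSet_lt measurable_snd measurable_fst) ?_ measurable_const
  fun_prop

lemma aux_prod (α : ℝ) (hα : α ∈ Ioo (0:ℝ) 1) :
    Integrable (Function.uncurry (fAux α))
      ((volume.restrict (Ioo (0:ℝ) 1)).prod (volume.restrict (Ioo (0:ℝ) 1))) := by
  rw [integrable_prod_iff' (aux_meas α).aestronglyMeasurable]
  constructor
  · filter_upwards [ae_restrict_mem measurableSet_Ioo] with s hs
    exact aux_s_int α s hα hs
  · have h : IntegrableOn (fun s : ℝ => (Real.Gamma (1 - α) * Real.Gamma (1 + α)) *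
        (s ^ α * (1 - s) ^ (1 - α))) (Ioo 0 1) := by
      refine IntegrableOn.mono_set ?_ Ioo_subset_Icc_self
      apply Continuous.integrableOn_Icc
      have h1 : Continuous (fun v : ℝ => (1 - v) ^ (1 - α)) :=
        (continuous_const.sub continuous_id).rpow_const (fun _ => Or.inr (by linarith [hα.2]))
      have h2 : Continuous (fun v : ℝ => v ^ α) :=
        continuous_id.rpow_const (fun _ => Or.inr hα.1.le)
      fun_prop
    refine Integrable.congr h ?_
    filter_upwards [ae_restrict_mem measurableSet_Ioo] with s hs
    rw [← aux_s α s hα hs]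
    apply setIntegral_congr_fun measurableSet_Ioo
    intro v hv
    simp only [Function.uncurry]
    rw [Real.norm_of_nonneg (aux_nonneg α v s hv hs)]

lemma aux_image : (fun v : ℝ => v / (1 - v)) '' Ioo 0 1 = Ioi 0 := by
  ext t
  simp only [mem_image, mem_Ioo, mem_Ioi]
  constructor
  · rintro ⟨v, ⟨a, b⟩, rfl⟩
    exact div_pos a (by linarith)
  · intro ht
    refine ⟨t / (1 + t), ⟨by positivity, by rw [div_lt_one (by positivity)]; linarith⟩, ?_⟩
    have : 1 + t ≠ 0 := by positivity
    field_simp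
    ring

lemma aux_inj : InjOn (fun v : ℝ => v / (1 - v)) (Ioo 0 1) := by
  intro a ha b hb h
  have h1 : 1 - a ≠ 0 := by linarith [ha.2]
  have h2 : 1 - b ≠ 0 := by linarith [hb.2]
  simp only at h
  rw [div_eq_div_iff h1 h2] at h
  linarith

lemma aux_deriv (v : ℝ) (hv : v ∈ Ioo (0:ℝ) 1) :
    HasDerivWithinAt (fun v : ℝ => v / (1 - v)) (1 / (1 - v) ^ 2) (Ioo 0 1) v := by
  have h1 : 1 - v ≠ 0 := by linarith [hv.2]
  have := (hasDerivAt_id v).div ((hasDerivAt_id v).const_sub 1) h1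
  refine (this.congr_deriv ?_).hasDerivWithinAt
  simp

lemma aux_pt (α v : ℝ) (hv : v ∈ Ioo (0:ℝ) 1) :
    |1 / (1 - v) ^ 2| • (v / (1 - v) * Fhyp α (v / (1 - v)) / (1 + v / (1 - v)) ^ 3) =
    (1 / (Real.Gamma (1 - α) * Real.Gamma (1 + α))) * ∫ s in Ioo (0:ℝ) 1, fAux α v s := by
  rw [aux_v α v hv, abs_of_nonneg (by positivity), Fhyp, smul_eq_mul]
  have h1 : 1 - v ≠ 0 := by linarith [hv.2]
  rw [show 1 + v / (1 - v) = 1 / (1 - v) by field_simp; ring]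
  generalize (∫ u in (0:ℝ)..1, u ^ (-α) * (1 - u) ^ α * (1 + v / (1 - v) * u) ^ (-α)) = J
  generalize 1 / (Real.Gamma (1 - α) * Real.Gamma (1 + α)) = C
  field_simp

lemma aux_main (α : ℝ) (hα : α ∈ Set.Ioo (0:ℝ) 1) :
    IntegrableOn (fun t => t * Fhyp α t / (1 + t)^3) (Set.Ioi 0) ∧
     ∫ t in Set.Ioi (0:ℝ), t * Fhyp α t / (1 + t)^3 =
       π * α * (1 - α) / (2 * Real.sin (π * α)) := by
  have hp := aux_prod α hα
  rw [← aux_image, integrableOn_image_iff_integrableOn_abs_deriv_smul measurableSet_Ioo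
    aux_deriv aux_inj, integral_image_eq_integral_abs_deriv_smul measurableSet_Ioo
    aux_deriv aux_inj]
  constructor
  · refine IntegrableOn.congr_fun ?_ (fun v hv => (aux_pt α v hv).symm) measurableSet_Ioo
    exact hp.integral_prod_left.const_mul _
  · rw [setIntegral_congr_fun measurableSet_Ioo (fun v hv => aux_pt α v hv),
      integral_const_mul, integral_integral_swap hp,
      setIntegral_congr_fun measurableSet_Ioo (fun s hs => aux_s α s hα hs),
      integral_const_mul]
    have b := aux_beta (1 + α) (2 - α) (by linarith [hα.1]) (by linarith [hα.2])
    rw [show 1 + α - 1 = α by ring, show 2 - α - 1 = 1 - α by ring,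
      intervalIntegral.integral_of_le zero_le_one, integral_Ioc_eq_integral_Ioo] at b
    rw [b]
    have g1 : Real.Gamma (1 - α) ≠ 0 := (Real.Gamma_pos_of_pos (by linarith [hα.2])).ne'
    have g2 : Real.Gamma (1 + α) ≠ 0 := (Real.Gamma_pos_of_pos (by linarith [hα.1])).ne'
    have r := Real.Gamma_mul_Gamma_one_sub α
    have e1 : Real.Gamma (1 + α) = α * Real.Gamma α := by
      rw [add_comm, Real.Gamma_add_one hα.1.ne']
    have e2 : Real.Gamma (2 - α) = (1 - α) * Real.Gamma (1 - α) := by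
      rw [show 2 - α = (1 - α) + 1 by ring, Real.Gamma_add_one (by linarith [hα.2])]
    have e3 : Real.Gamma (1 + α + (2 - α)) = 2 := by
      rw [show 1 + α + (2 - α) = 2 + 1 by ring, Real.Gamma_add_one (by norm_num), Real.Gamma_two]
      norm_num
    rw [← mul_assoc, one_div_mul_cancel (mul_ne_zero g1 g2), one_mul, e3, e1, e2,
      show α * Real.Gamma α * ((1 - α) * Real.Gamma (1 - α)) =
        α * (1 - α) * (Real.Gamma α * Real.Gamma (1 - α)) by ring, r]
    ring

theorem normalisation_condition (α : ℝ) (hα : α ∈ Set.Ioo (0:ℝ) 1) :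
    (IntegrableOn (fun t => t * Fhyp α t / (1 + t)^3) (Set.Ioi 0) ∧
     ∫ t in Set.Ioi (0:ℝ), t * Fhyp α t / (1 + t)^3 =
       π * α * (1 - α) / (2 * Real.sin (π * α))) ∧
    ∀ lam μ2 : ℝ, lam = Real.sin (π * α) / π → μ2 = α * (1 - α) / lam →
      ∀ ρ : ℝ → ℝ, (∀ t, ρ t = t * Fhyp α (t / μ2)) →
        IntegrableOn (fun t => ρ t / (t + μ2)^3) (Set.Ioi 0) ∧
        ∫ t in Set.Ioi (0:ℝ), ρ t / (t + μ2)^3 = 1/2 := by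
  refine ⟨aux_main α hα, ?_⟩
  rintro lam m hl hm ρ hρ
  obtain ⟨hi, hv⟩ := aux_main α hα
  have ha0 := hα.1
  have ha1 : 0 < 1 - α := by linarith [hα.2]
  have hsin : 0 < Real.sin (π * α) :=
    Real.sin_pos_of_pos_of_lt_pi (by positivity) (by nlinarith [Real.pi_pos])
  have hlp : 0 < lam := by rw [hl]; positivity
  have hmp : 0 < m := by rw [hm]; positivity
  have e : (fun t => ρ t / (t + m)^3) = fun t => (m⁻¹) ^ 2 *
      (fun t => t * Fhyp α t / (1 + t)^3) (m⁻¹ * t) := by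
    ext t
    rw [hρ t]
    simp only
    rw [show m⁻¹ * t = t / m by ring, show 1 + t / m = (t + m) / m by field_simp; ring]
    generalize Fhyp α (t / m) = J
    rw [div_pow]
    by_cases h : t + m = 0
    · simp [h]
    · field_simp
  rw [e]
  have hmi : 0 < m⁻¹ := by positivity
  constructor
  · apply Integrable.const_mul
    have := (integrableOn_Ioi_comp_mul_left_iff
      (fun t => t * Fhyp α t / (1 + t)^3) 0 hmi).2 (by simpa using hi)
    exact this
  · rw [integral_const_mul, integral_comp_mul_left_Ioi (fun t => t * Fhyp α t / (1 + t)^3) 0 hmi, mul_zero, hv, hm, hl, smul_eq_mul]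
    have := Real.pi_pos
    field_simp
    exact div_self (by rw [mul_comm]; exact hsin.ne')
end
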